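/- For any homeomorphism h : ℕ_τ → ℕ_τ of the Golomb space, any prime number p, and any n ∈ ℕ, one has h(1+p^nℕ₀) = 1+h(p)^nℕ₀. -/

import Mathlib

/-!
A homeomorphism `h` of the Golomb space preserves coprimality of distinct numbers, because
coprimality can be read off from the way closures of neighbourhoods intersect (`coprime_iff`). Hence
`h 1 = 1`, and `h` induces a bijection `p ↔ q` of the primes (`Corr`) under which multiples of `p`
go to multiples of `q` and powers of `p` go to powers of `q`. Moreover `h` is continuous from the
`p`-adic to the `q`-adic topology off the multiples of `p` (`Corr.exists_modEq`). It follows that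
`h` carries the `r`-adic closure of the powers of a prime `p ≠ r`, which is the trace `clos r p` of a
topologically cyclic subgroup of `ℤ_r^×`, onto the analogous set for the corresponding primes
(`Corr.mem_clos_iff`), and that it respects inclusions between these subgroups.

Among these subgroups the groups `1 + r ^ n ℤ_r` are recognised by order. By lifting the exponent
and Dirichlet's theorem each of them has a prime generator (for `n ≥ 1` if `r` is odd, for `n ≥ 2` if
`r = 2`). For odd `r` and `n ≥ 1` they are exactly the subgroups below which there is only a chain
(`ChainBelow`). The prime `2` is fixed, as `3` and `5` generate incomparable subgroups of `ℤ_2^×`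
with chains below them; for `r = 2` the non-maximal subgroups are the `1 + 2 ^ n ℤ_2` with `n ≥ 3`.
An order isomorphism of two decreasing sequences preserves the index (`maps_self`), so
`1 + r ^ n ℕ₀` goes to `1 + s ^ n ℕ₀` for corresponding `r` and `s`. What remains is `1 + 2ℕ₀`, the
complement of the multiples of `2`, and `1 + 4ℕ₀ = clos 2 5`, for which the primes `3` and `5` are
shown to be fixed by computing with `h 3`, `h 4` and `h 5`.

Finally `h p` is itself the prime `q` corresponding to `p`, since `h p - 1` divides `q - 1` and `q`
divides `h p` (`Corr.coe_apply`).
-/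

open TopologicalSpace

/-- The arithmetic progression `a + bℕ₀ = {a + b*n : n ≥ 0}` inside the positive integers. -/
def golombBasic (a b : ℕ) : Set ℕ+ := {x : ℕ+ | ∃ n : ℕ, (x : ℕ) = a + b * n}

/-- The Golomb topology on the positive integers, generated by the arithmetic
progressions `a + bℕ₀` with coprime `a, b ∈ ℕ`. -/
instance golombTopology : TopologicalSpace ℕ+ :=
  generateFrom {S : Set ℕ+ | ∃ a b : ℕ, 0 < a ∧ 0 < b ∧ Nat.Coprime a b ∧ S = golombBasic a b}

/-- The positive integers not divisible by `p` (the set `ℕ \ pℕ`). -/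
abbrev Np (p : ℕ) : Type := {x : ℕ+ // ¬ p ∣ (x : ℕ)}

/-- The `p`-adic topology on `ℕ \ pℕ`, generated by the traces of the sets
`x + p^nℕ₀`, `x, n ∈ ℕ`. -/
def padicTop (p : ℕ) : TopologicalSpace (Np p) :=
  generateFrom {S : Set (Np p) | ∃ x n : ℕ, 0 < x ∧ 0 < n ∧
    S = {y : Np p | ∃ k : ℕ, ((y : ℕ+) : ℕ) = x + p ^ n * k}}

/-- Closure of a set of positive integers in the `p`-adic topology on `ℕ \ pℕ`,
viewed again as a set of positive integers. -/
def padicClosure (p : ℕ) (A : Set ℕ+) : Set ℕ+ :=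
  Subtype.val '' (@closure (Np p) (padicTop p) (Subtype.val ⁻¹' A))

/-- `a^ℕ = {a^k : k ∈ ℕ}`, the set of positive powers of `a`. -/
def powSet (a : ℕ) : Set ℕ+ := {y : ℕ+ | ∃ k : ℕ, 0 < k ∧ (y : ℕ) = a ^ k}

/-- The closure of `a^ℕ` in the `p`-adic topology on `ℕ \ pℕ`. -/
def clPow (p a : ℕ) : Set ℕ+ := padicClosure p (powSet a)

/-- The family `𝒳_p` of closures of the sets `a^ℕ` for `a ∈ ℕ \ pℕ`, `a ≠ 1`. -/
def XX (p : ℕ) : Set (Set ℕ+) := {X | ∃ a : ℕ, 0 < a ∧ a ≠ 1 ∧ ¬ p ∣ a ∧ X = clPow p a}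

/-- The projection `π_n(X)` of a set of positive integers to `ℤ/p^nℤ`. -/
def pin (p n : ℕ) (X : Set ℕ+) : Set (ZMod (p ^ n)) :=
  (fun y : ℕ+ => ((y : ℕ) : ZMod (p ^ n))) '' X

/-- `n(X)`: the least `n ∈ ℕ` with `X = ℕ ∩ π_n⁻¹(π_n(X))` and `|π_n(X)| ≥ max(p,3)`. -/
noncomputable def nX (p : ℕ) (X : Set ℕ+) : ℕ :=
  sInf {n : ℕ | 0 < n ∧ X = {y : ℕ+ | ((y : ℕ) : ZMod (p ^ n)) ∈ pin p n X} ∧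
    max p 3 ≤ (pin p n X).ncard}

/-- `i(X)`: the index of the subgroup `π_{n(X)}(X)` in the group of units of `ℤ/p^{n(X)}ℤ`. -/
noncomputable def iX (p : ℕ) (X : Set ℕ+) : ℕ :=
  Nat.card ((ZMod (p ^ nX p X))ˣ) / (pin p (nX p X) X).ncard

/-! ### Closed subgroups of `ℤ_r^×` generated by one number -/

/-- The closure of `{p ^ k : k ≥ 0}` in the `r`-adic topology of `ℕ`; for distinct primes
`p` and `r` it is the trace on `ℕ` of the closed subgroup of `ℤ_r^×` generated by `p`. -/
def clos (r p : ℕ) : Set ℕ := {y | ∀ n, ∃ k, p ^ k ≡ y [MOD r ^ n]}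

lemma self_mem_clos (r p : ℕ) : p ∈ clos r p := fun n => ⟨1, by simp [Nat.ModEq.refl]⟩

lemma clos_trans {r p s y : ℕ} (hs : s ∈ clos r p) (hy : y ∈ clos r s) : y ∈ clos r p := by
  intro n
  obtain ⟨j, hj⟩ := hs n
  obtain ⟨k, hk⟩ := hy n
  exact ⟨j * k, by rw [pow_mul]; exact (hj.pow k).trans hk⟩

lemma one_add_pow_modEq {N r : ℕ} (w j : ℕ) (h : r ∣ N) :
    (1 + N * w) ^ j ≡ 1 + j * (N * w) [MOD r * N] := by
  induction j with
  | zero => simp [Nat.ModEq.refl]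
  | succ j ih =>
    rw [pow_succ]
    refine (ih.mul_right _).trans ?_
    have hd : r * N ∣ j * (N * w) * (N * w) := by
      obtain ⟨c, rfl⟩ := h
      exact ⟨j * c * w * w, by ring⟩
    have e : (1 + j * (N * w)) * (1 + N * w) =
        1 + (j + 1) * (N * w) + j * (N * w) * (N * w) := by ring
    rw [e]
    simpa using Nat.ModEq.add_left (1 + (j + 1) * (N * w)) (Nat.modEq_zero_iff_dvd.2 hd)

lemma pow_not_modEq_one {r v x e : ℕ} (hr : r.Prime) (hv : v ≠ 0) (hx : ¬ r ∣ x) (he : ¬ r ∣ e) :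
    ¬ (1 + r ^ v * x) ^ e ≡ 1 [MOD r ^ (v + 1)] := by
  intro h
  have h1 := one_add_pow_modEq x e (dvd_pow_self r hv)
  rw [← pow_succ'] at h1
  have h2 : 1 + e * (r ^ v * x) ≡ 1 + 0 [MOD r ^ (v + 1)] := h1.symm.trans h
  have h3 := Nat.modEq_zero_iff_dvd.1 (Nat.ModEq.add_left_cancel' 1 h2)
  have h4 : r ^ v * r ∣ r ^ v * (e * x) := by
    rw [← pow_succ]; convert h3 using 1; ring
  have h5 := Nat.dvd_of_mul_dvd_mul_left (pow_pos hr.pos v) h4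
  rcases hr.dvd_mul.1 h5 with h | h <;> contradiction

/-- The powers of `1 + r ^ v * x` with `r ∤ x` are `r`-adically dense in `1 + r ^ v ℤ_r`.
The hypothesis `v + 2 ≤ v * r` says `v ≥ 1` for odd `r` and `v ≥ 2` for `r = 2`. -/
lemma exists_pow_modEq {r v x y : ℕ} (hr : r.Prime) (hv : v ≠ 0) (hvr : v + 2 ≤ v * r)
    (hx : ¬ r ∣ x) (hy : y ≡ 1 [MOD r ^ v]) (m : ℕ) :
    ∃ k, (1 + r ^ v * x) ^ k ≡ y [MOD r ^ (v + m)] := by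
  induction m with
  | zero => exact ⟨0, by simpa using hy.symm⟩
  | succ m ih =>
    obtain ⟨k, hk⟩ := ih
    set a := 1 + r ^ v * x with ha
    obtain ⟨z, hz⟩ := ZMod.exists_one_add_mul_pow_prime_pow_eq (R := ℕ) (u := r ^ v) (v := r) hr
      (dvd_pow_self r hv)
      (by
        have : r * r ^ v * r = r ^ (v + 2) := by ring
        simp only [Nat.cast_id]
        rw [this, ← pow_mul]; exact pow_dvd_pow _ hvr) x m
    set w := x + r * z with hw
    have hrw : ¬ r ∣ w := fun h => hx ((Nat.dvd_add_left (dvd_mul_right r z)).1 h)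
    have hN : (1 + r ^ v * x) ^ r ^ m = 1 + r ^ (v + m) * w := by
      rw [hz]; simp only [Nat.cast_id]; ring
    have hrN : r ∣ r ^ (v + m) := dvd_pow_self r (by omega)
    have := Fact.mk hr
    obtain ⟨t, ht⟩ := (Nat.modEq_iff_dvd.1 hk)
    have hw0 : (w : ZMod r) ≠ 0 := by rwa [Ne, ZMod.natCast_eq_zero_iff]
    -- `k` is corrected by a multiple `r ^ m * j`, which changes `a ^ k` by `j * w * r ^ (v + m)`.
    let j := ((t : ZMod r) / (w : ZMod r)).val
    have hj : (j : ZMod r) * w = t := by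
      simp only [j, ZMod.natCast_val, ZMod.cast_id', id_eq]
      field_simp
    have ha1 : ((a : ℕ) : ZMod r) = 1 := by
      rw [ha]; push_cast; simp [hv]
    refine ⟨k + r ^ m * j, ?_⟩
    rw [pow_add a, pow_mul a, ha, hN, ← ha]
    have h1 := (one_add_pow_modEq w j hrN).mul_left (a ^ k)
    rw [← pow_succ', add_assoc] at h1
    refine h1.trans ?_
    rw [Nat.modEq_iff_dvd]
    have h2 : (r : ℤ) ∣ t - (a : ℤ) ^ k * j * w := by
      rw [← ZMod.intCast_zmod_eq_zero_iff_dvd]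
      push_cast
      rw [ha1, one_pow, one_mul, hj, sub_self]
    obtain ⟨c, hc⟩ := h2
    refine ⟨c, ?_⟩
    push_cast at ht ⊢
    have e : (r : ℤ) ^ (v + (m + 1)) = r ^ (v + m) * r := by ring
    rw [e, mul_assoc, ← hc]
    linear_combination ht

lemma mem_clos_iff {r v x y : ℕ} (hr : r.Prime) (hv : v ≠ 0) (hvr : v + 2 ≤ v * r)
    (hx : ¬ r ∣ x) : y ∈ clos r (1 + r ^ v * x) ↔ y ≡ 1 [MOD r ^ v] := by
  constructor
  · intro h
    obtain ⟨k, hk⟩ := h v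
    have h1 : 1 + r ^ v * x ≡ 1 [MOD r ^ v] := by simp [Nat.ModEq]
    simpa using hk.symm.trans (h1.pow k)
  · intro h n
    obtain ⟨k, hk⟩ := exists_pow_modEq hr hv hvr hx h n
    exact ⟨k, hk.of_dvd (pow_dvd_pow _ (by omega))⟩

lemma exists_eq_one_add {r p e : ℕ} (hr : r.Prime) (hp : 1 < p) (h : p ≡ 1 [MOD r ^ e]) :
    ∃ v x, e ≤ v ∧ ¬ r ∣ x ∧ p = 1 + r ^ v * x := by
  obtain ⟨v, x, hx, hvx⟩ := Nat.exists_eq_pow_mul_and_not_dvd (n := p - 1) (by omega) r hr.ne_one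
  refine ⟨v, x, ?_, hx, by omega⟩
  have h1 : r ^ e ∣ r ^ v * x := by
    rw [← hvx]; exact (Nat.modEq_iff_dvd' hp.le).1 h.symm
  exact (Nat.pow_dvd_pow_iff_le_right hr.one_lt).1
    (Nat.Coprime.dvd_of_dvd_mul_right
      (Nat.Coprime.pow_left _ ((Nat.Prime.coprime_iff_not_dvd hr).2 hx)) h1)

lemma clos_of_modEq {r p e : ℕ} (hr : r.Prime) (he : e ≠ 0) (her : e + 2 ≤ e * r) (hp : 1 < p)
    (h : p ≡ 1 [MOD r ^ e]) :
    ∃ v, e ≤ v ∧ clos r p = {y | y ≡ 1 [MOD r ^ v]} := by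
  obtain ⟨v, x, hev, hx, rfl⟩ := exists_eq_one_add hr hp h
  refine ⟨v, hev, Set.ext fun y => mem_clos_iff hr (by omega) ?_ hx⟩
  obtain ⟨d, rfl⟩ := Nat.exists_eq_add_of_le hev
  have := hr.two_le
  nlinarith

/-- Every `1 + r ^ v ℤ_r` is generated by a prime number. -/
lemma exists_prime_clos_eq {r v : ℕ} (hr : r.Prime) (hv : v ≠ 0) (hvr : v + 2 ≤ v * r) :
    ∃ p, p.Prime ∧ p ≠ r ∧ p ≡ 1 [MOD r ^ v] ∧ clos r p = {y | y ≡ 1 [MOD r ^ v]} := by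
  have hco : Nat.Coprime (1 + r ^ v) (r ^ (v + 1)) := by
    apply Nat.Coprime.pow_right
    rw [Nat.coprime_comm, hr.coprime_iff_not_dvd]
    intro h
    exact hr.one_lt.ne' (Nat.dvd_one.1 ((Nat.dvd_add_left (dvd_pow_self r hv)).1 h))
  obtain ⟨p, hpr, hp, hpm⟩ := Nat.forall_exists_prime_gt_and_modEq r
    (pow_ne_zero (v + 1) hr.ne_zero) hco
  have h1 : p ≡ 1 [MOD r ^ v] :=
    (hpm.of_dvd (pow_dvd_pow r (by omega))).trans (by simp [Nat.ModEq])
  obtain ⟨u, x, hvu, hx, hpe⟩ := exists_eq_one_add hr hp.one_lt h1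
  have hu : u = v := by
    by_contra hne
    obtain ⟨d, rfl⟩ := Nat.exists_eq_add_of_le (show v + 1 ≤ u by omega)
    have h2 : p ≡ 1 [MOD r ^ (v + 1)] := by
      rw [hpe, pow_add r (v + 1) d, mul_assoc]; simp [Nat.ModEq]
    have h3 : 1 + r ^ v ≡ 1 + 0 [MOD r ^ (v + 1)] := hpm.symm.trans h2
    have h4 := Nat.modEq_zero_iff_dvd.1 (Nat.ModEq.add_left_cancel' 1 h3)
    have := (Nat.pow_dvd_pow_iff_le_right hr.one_lt).1 h4
    omega
  subst hu
  refine ⟨p, hp, hpr.ne', h1, ?_⟩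
  rw [hpe]
  exact Set.ext fun y => mem_clos_iff hr hv hvr hx

/-! ### Inclusions between topologically cyclic subgroups -/

lemma clos_comparable {r e p q : ℕ} (hr : r.Prime) (he : e ≠ 0) (her : e + 2 ≤ e * r)
    (hp : 1 < p) (hq : 1 < q) (hp1 : p ≡ 1 [MOD r ^ e]) (hq1 : q ≡ 1 [MOD r ^ e]) :
    p ∈ clos r q ∨ q ∈ clos r p := by
  obtain ⟨v, -, hv⟩ := clos_of_modEq hr he her hp hp1
  obtain ⟨u, -, hu⟩ := clos_of_modEq hr he her hq hq1
  have hp2 : p ≡ 1 [MOD r ^ v] := by have := self_mem_clos r p; rwa [hv] at this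
  have hq2 : q ≡ 1 [MOD r ^ u] := by have := self_mem_clos r q; rwa [hu] at this
  rw [hu, hv]
  rcases le_total v u with h | h
  · exact Or.inr (hq2.of_dvd (pow_dvd_pow _ h))
  · exact Or.inl (hp2.of_dvd (pow_dvd_pow _ h))

lemma pow_totient_modEq {r p : ℕ} (hr : r.Prime) (hp : p.Prime) (hpr : p ≠ r) (n : ℕ) :
    p ^ Nat.totient (r ^ n) ≡ 1 [MOD r ^ n] :=
  Nat.ModEq.pow_totient (Nat.Coprime.pow_right _ ((Nat.coprime_primes hp hr).2 hpr))

/-- If the closed subgroup generated by `p` contains `1 + r ^ v ℤ_r`, then it is a union of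
residue classes modulo `r ^ v`. -/
lemma mem_clos_of_modEq_pow {r p t v j : ℕ} (hr : r.Prime) (hp : p.Prime) (hpr : p ≠ r)
    (hv : ∀ y, y ≡ 1 [MOD r ^ v] → y ∈ clos r p) (ht : t ≡ p ^ j [MOD r ^ v]) :
    t ∈ clos r p := by
  have key : ∀ n, v ≤ n → ∃ k, p ^ k ≡ t [MOD r ^ n] := by
    intro n hn
    set f := Nat.totient (r ^ n) with hf
    have hf1 : 1 ≤ f := Nat.totient_pos.2 (pow_pos hr.pos n)
    have hpf : p ^ f ≡ 1 [MOD r ^ n] := pow_totient_modEq hr hp hpr n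
    have e : ∀ a, a * p ^ (j * (f - 1)) * p ^ j = a * (p ^ f) ^ j := by
      intro a
      rw [mul_assoc, ← pow_add, ← pow_mul]
      congr 2
      obtain ⟨g, hg⟩ := Nat.exists_eq_add_of_le hf1
      rw [hg, Nat.add_sub_cancel_left]; ring
    -- `t * p ^ (-j)` is congruent to `1` modulo `r ^ v`.
    have hw : t * p ^ (j * (f - 1)) ≡ 1 [MOD r ^ v] := by
      have h1 := ht.mul_right (p ^ (j * (f - 1)))
      have h2 : p ^ j * p ^ (j * (f - 1)) = (p ^ f) ^ j := by
        have := e 1; rw [one_mul, one_mul] at this; rw [mul_comm, this]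
      rw [h2] at h1
      refine h1.trans ?_
      simpa using (hpf.of_dvd (pow_dvd_pow r hn)).pow j
    obtain ⟨k, hk⟩ := hv _ hw n
    refine ⟨k + j, ?_⟩
    rw [pow_add]
    refine (hk.mul_right (p ^ j)).trans ?_
    rw [e]
    simpa using (hpf.pow j).mul_left t
  intro n
  obtain ⟨k, hk⟩ := key (max v n) (le_max_left _ _)
  exact ⟨k, hk.of_dvd (pow_dvd_pow r (le_max_right _ _))⟩

/-- The subgroups `clos r s`, with `s` prime, that are contained in `clos r p` form a chain. -/
def ChainBelow (r p : ℕ) : Prop :=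
  ∀ s t : ℕ, s.Prime → t.Prime → s ≠ r → t ≠ r → s ∈ clos r p → t ∈ clos r p →
    s ∈ clos r t ∨ t ∈ clos r s

lemma chainBelow_of_modEq {r e p : ℕ} (hr : r.Prime) (he : e ≠ 0) (her : e + 2 ≤ e * r)
    (hp1 : p ≡ 1 [MOD r ^ e]) : ChainBelow r p := by
  intro s t hs ht _ _ hsp htp
  have key : ∀ s, s ∈ clos r p → s ≡ 1 [MOD r ^ e] := by
    intro s hs
    obtain ⟨k, hk⟩ := hs e
    simpa using hk.symm.trans (hp1.pow k)
  exact clos_comparable hr he her hs.one_lt ht.one_lt (key s hsp) (key t htp)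

/-- For odd `r`, a chain below `p` forces `p ≡ 1 mod r`: otherwise the subgroups generated by
`p ^ (r - 1)` and `p ^ r` are incomparable. -/
lemma modEq_of_chainBelow {r p : ℕ} (hr : r.Prime) (hr2 : r ≠ 2) (hp : p.Prime) (hpr : p ≠ r)
    (h : ChainBelow r p) : p ≡ 1 [MOD r] := by
  by_contra hp1
  have hr3 : 3 ≤ r := by have := hr.two_le; omega
  have hcop : Nat.Coprime p r := (Nat.coprime_primes hp hr).2 hpr
  have hferm : p ^ (r - 1) ≡ 1 [MOD r ^ 1] := by
    have := pow_totient_modEq hr hp hpr 1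
    rwa [pow_one, Nat.totient_prime hr] at *
  have hg : 1 < p ^ (r - 1) := Nat.one_lt_pow (by omega) hp.one_lt
  obtain ⟨v, x, hv, hx, hvx⟩ := exists_eq_one_add hr hg hferm
  have hvr : v + 2 ≤ v * r := by nlinarith
  have hopen : ∀ y, y ≡ 1 [MOD r ^ v] → y ∈ clos r p := by
    intro y hy
    have h1 : y ∈ clos r (p ^ (r - 1)) := by rw [hvx]; exact (mem_clos_iff hr (by omega) hvr hx).2 hy
    intro n
    obtain ⟨k, hk⟩ := h1 n
    exact ⟨(r - 1) * k, by rwa [pow_mul]⟩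
  have hq0 : r ^ (v + 1) ≠ 0 := pow_ne_zero _ hr.ne_zero
  obtain ⟨s, hsr, hs, hsm⟩ := Nat.forall_exists_prime_gt_and_modEq r hq0
    (Nat.Coprime.pow (r - 1) (v + 1) hcop)
  obtain ⟨t, htr, ht, htm⟩ := Nat.forall_exists_prime_gt_and_modEq r hq0
    (Nat.Coprime.pow r (v + 1) hcop)
  have hvv : r ^ v ∣ r ^ (v + 1) := pow_dvd_pow r (by omega)
  have hrv : r ∣ r ^ (v + 1) := dvd_pow_self r (by omega)
  rcases h s t hs ht hsr.ne' htr.ne'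
    (mem_clos_of_modEq_pow hr hp hpr hopen (hsm.of_dvd hvv))
    (mem_clos_of_modEq_pow hr hp hpr hopen (htm.of_dvd hvv)) with hst | hts
  · obtain ⟨k, hk⟩ := hst (v + 1)
    have h1 : p ^ (r * k) ≡ p ^ (r - 1) [MOD r ^ (v + 1)] := by
      rw [pow_mul]; exact (htm.pow k).symm.trans (hk.trans hsm)
    -- With `g = p ^ (r - 1)`, raising to the power `r - 1` gives `g ^ (r * k) ≡ g ^ (r - 1)`.
    have h2 : (p ^ (r - 1)) ^ (r * k) ≡ (p ^ (r - 1)) ^ (r - 1) [MOD r ^ (v + 1)] := by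
      have := h1.pow (r - 1)
      rwa [← pow_mul, mul_comm (r * k), pow_mul] at this
    have h3 : ((p ^ (r - 1)) ^ (r * k)) ≡ 1 [MOD r ^ (v + 1)] := by
      rw [hvx, pow_mul]
      have h4 : (1 + r ^ v * x) ^ r ≡ 1 [MOD r ^ (v + 1)] := by
        have := one_add_pow_modEq (N := r ^ v) (r := r) x r (dvd_pow_self r (by omega))
        rw [← pow_succ'] at this
        refine this.trans ?_
        have e : r * (r ^ v * x) = r ^ (v + 1) * x := by ring
        rw [e]; simp [Nat.ModEq]
      simpa using h4.pow k
    have h5 : ¬ r ∣ r - 1 := fun hd => by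
      have := Nat.le_of_dvd (by omega) hd
      omega
    rw [hvx] at h2 h3
    exact pow_not_modEq_one hr (by omega) hx h5 (h2.symm.trans h3)
  · obtain ⟨k, hk⟩ := hts 1
    rw [pow_one] at hk
    have hs1 : s ≡ 1 [MOD r] := (hsm.of_dvd hrv).trans (by simpa using hferm)
    have ht1 : t ≡ 1 [MOD r] := by simpa using hk.symm.trans (hs1.pow k)
    have ht2 : t ≡ p [MOD r] := by
      refine (htm.of_dvd hrv).trans ?_
      have e : p ^ r = p ^ (r - 1) * p := by rw [← pow_succ]; congr 1; omega
      rw [e]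
      have := hferm.mul_right p
      simpa using this
    exact hp1 (ht2.symm.trans ht1)

lemma pow_mod_eight {s : ℕ} (hs : s % 2 = 1) (k : ℕ) :
    s ^ k % 8 = 1 ∨ (s ^ k % 8 = s % 8 ∧ k % 2 = 1) := by
  induction k with
  | zero => left; simp
  | succ k ih =>
    have h8 : s % 8 = 1 ∨ s % 8 = 3 ∨ s % 8 = 5 ∨ s % 8 = 7 := by omega
    rcases Nat.even_or_odd' k with ⟨j, rfl | rfl⟩
    · right
      have : s ^ (2 * j) % 8 = 1 := by
        rw [pow_mul, Nat.pow_mod, Nat.pow_mod s 2]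
        rcases h8 with h | h | h | h <;> simp [h]
      rw [pow_succ, Nat.mul_mod, this]
      constructor <;> omega
    · left
      have : 2 * j + 1 + 1 = 2 * (j + 1) := by ring
      rw [this, pow_mul, Nat.pow_mod, Nat.pow_mod s 2]
      rcases h8 with h | h | h | h <;> simp [h]

/-- Outside `1 + 8ℤ_2`, a generator of a topologically cyclic subgroup of `ℤ_2^×` contained in
another such subgroup is an odd power of the other generator, so the two subgroups coincide. -/
lemma mem_clos_two_symm {p s : ℕ} (hs : s.Prime) (hs2 : s ≠ 2)
    (hp1 : p % 8 ≠ 1) (h : p ∈ clos 2 s) : s ∈ clos 2 p := by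
  have hso : s % 2 = 1 := hs.eq_two_or_odd.resolve_left hs2
  intro n
  obtain ⟨k, hk⟩ := h (n + 3)
  have hk8 : s ^ k % 8 = p % 8 := by
    have := hk.of_dvd (show 8 ∣ 2 ^ (n + 3) from ⟨2 ^ n, by ring⟩)
    exact this
  have hkodd : k % 2 = 1 := by
    rcases pow_mod_eight hso k with h | h
    · omega
    · exact h.2
  have hcop : Nat.Coprime k (2 ^ (n + 2)) := by
    apply Nat.Coprime.pow_right
    rw [Nat.coprime_two_right]
    exact Nat.odd_iff.2 hkodd
  obtain ⟨j, hj⟩ := Nat.exists_mul_mod_eq_one_of_coprime hcop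
    (Nat.one_lt_pow (by omega) (by omega))
  refine ⟨j, Nat.ModEq.of_dvd (pow_dvd_pow 2 (show n ≤ n + 3 by omega)) ?_⟩
  refine (hk.pow j).symm.trans ?_
  rw [← pow_mul]
  have htot := pow_totient_modEq Nat.prime_two hs hs2 (n + 3)
  rw [Nat.totient_prime_pow_succ Nat.prime_two] at htot
  have e : k * j = 2 ^ (n + 2) * (k * j / 2 ^ (n + 2)) + 1 := by
    conv_lhs => rw [← Nat.div_add_mod (k * j) (2 ^ (n + 2)), hj.2]
  rw [e, pow_succ s, pow_mul s]
  simpa using (htot.pow (k * j / 2 ^ (n + 2))).mul_right s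

lemma chainBelow_two {p : ℕ} (hp : p.Prime) (hp2 : p ≠ 2) : ChainBelow 2 p := by
  intro s t hs ht hs2 ht2 hsp htp
  by_cases h1 : s % 8 = 1
  · by_cases h2 : t % 8 = 1
    · exact clos_comparable (e := 3) Nat.prime_two (by norm_num) (by norm_num) hs.one_lt ht.one_lt
        h1 h2
    · exact Or.inl (clos_trans (mem_clos_two_symm hp hp2 h2 htp) hsp)
  · exact Or.inr (clos_trans (mem_clos_two_symm hp hp2 h1 hsp) htp)

/-! ### Closures in the Golomb topology and coprimality -/

lemma exists_modEq_subset {U : Set ℕ+} (hU : IsOpen U) {x : ℕ+} (hx : x ∈ U) :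
    ∃ b : ℕ, 0 < b ∧ Nat.Coprime x b ∧ ∀ y : ℕ+, (y : ℕ) ≡ x [MOD b] → y ∈ U := by
  induction hU with
  | basic s hs =>
    obtain ⟨a, b, ha, hb, hab, rfl⟩ := hs
    obtain ⟨n, hn⟩ := hx
    have hxb : Nat.Coprime x b := by rw [hn]; simpa using hab
    -- A modulus exceeding `x` makes every `y ≡ x` at least `x`.
    refine ⟨b * (x * b + 1), by positivity, Nat.Coprime.mul_right hxb (by simp), ?_⟩
    intro y hy
    have hlt : (x : ℕ) < b * (x * b + 1) := by
      nlinarith [x.pos, Nat.mul_le_mul hb hb, Nat.mul_le_mul_left (x : ℕ) (Nat.mul_le_mul hb hb)]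
    have hle : (x : ℕ) ≤ y := by
      have := Nat.mod_le (y : ℕ) (b * (x * b + 1))
      rw [hy, Nat.mod_eq_of_lt hlt] at this
      exact this
    obtain ⟨c, hc⟩ := (Nat.modEq_iff_dvd' hle).1 hy.symm
    refine ⟨n + (x * b + 1) * c, ?_⟩
    have e : (y : ℕ) = x + b * (x * b + 1) * c := by omega
    rw [e, hn]; ring
  | univ => exact ⟨1, one_pos, by simp, fun _ _ => trivial⟩
  | inter s t _ _ ihs iht =>
    obtain ⟨b, hb, hxb, hbs⟩ := ihs hx.1
    obtain ⟨c, hc, hxc, hct⟩ := iht hx.2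
    exact ⟨b * c, Nat.mul_pos hb hc, hxb.mul_right hxc, fun y hy =>
      ⟨hbs y (hy.of_dvd (dvd_mul_right _ _)), hct y (hy.of_dvd (dvd_mul_left _ _))⟩⟩
  | sUnion S _ ih =>
    obtain ⟨s, hs, hxs⟩ := hx
    obtain ⟨b, hb, hxb, hbs⟩ := ih s hs hxs
    exact ⟨b, hb, hxb, fun y hy => ⟨s, hs, hbs y hy⟩⟩

lemma isOpen_modEq {a b : ℕ} (hb : 0 < b) (hab : Nat.Coprime a b) :
    IsOpen {x : ℕ+ | (x : ℕ) ≡ a [MOD b]} := by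
  rw [isOpen_iff_forall_mem_open]
  intro x hx
  refine ⟨golombBasic x b, ?_, TopologicalSpace.isOpen_generateFrom_of_mem
    ⟨x, b, x.pos, hb, ?_, rfl⟩, ⟨0, by simp⟩⟩
  · rintro y ⟨n, hn⟩
    refine Nat.ModEq.trans ?_ hx
    rw [hn]; simp [Nat.ModEq]
  · have := Nat.ModEq.gcd_eq hx
    rw [Nat.Coprime, this]; exact hab

/-- Every neighbourhood `U` of `x` imposes, at a single prime `p`, at most a `p`-adic condition:
its closure contains all multiples of a suitable `c` coprime to `p` that are `p`-adically close to
`x` (or all multiples of `c`, when `p ∣ x`). -/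
lemma exists_mem_closure {U : Set ℕ+} (hU : IsOpen U) {x : ℕ+} (hx : x ∈ U) {p : ℕ}
    (hp : p.Prime) :
    ∃ c n : ℕ, 0 < c ∧ Nat.Coprime p c ∧
      ∀ w : ℕ+, c ∣ w → (p ∣ x ∨ (w : ℕ) ≡ x [MOD p ^ n]) → w ∈ closure U := by
  obtain ⟨b, hb, hxb, hbU⟩ := exists_modEq_subset hU hx
  obtain ⟨n, c, hpc, rfl⟩ := Nat.exists_eq_pow_mul_and_not_dvd hb.ne' p hp.ne_one
  have hc : 0 < c := Nat.pos_of_mul_pos_left hb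
  refine ⟨c, n, hc, (hp.coprime_iff_not_dvd).2 hpc, fun w hcw hw => ?_⟩
  have hw' : (w : ℕ) ≡ x [MOD p ^ n] := by
    rcases hw with hpx | hw
    · have hn : n = 0 := by
        by_contra hn
        have : p ∣ Nat.gcd x (p ^ n * c) := Nat.dvd_gcd hpx ((dvd_pow_self p hn).mul_right c)
        rw [hxb] at this
        exact hp.one_lt.ne' (Nat.dvd_one.1 this)
      subst hn
      simp [Nat.modEq_one]
    · exact hw
  rw [mem_closure_iff]
  intro O hO hwO
  obtain ⟨d, hd, hwd, hdO⟩ := exists_modEq_subset hO hwO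
  have hcd : Nat.Coprime c d := Nat.Coprime.coprime_dvd_left hcw hwd
  have hg : Nat.gcd d (p ^ n * c) ∣ p ^ n :=
    Nat.Coprime.dvd_of_dvd_mul_right
      (Nat.Coprime.coprime_dvd_left (Nat.gcd_dvd_left _ _) hcd.symm) (Nat.gcd_dvd_right _ _)
  obtain ⟨y, hy1, hy2⟩ := Nat.chineseRemainder' (hw'.of_dvd hg)
  have hpos : 0 < y + d * (p ^ n * c) := by positivity
  refine ⟨⟨y + d * (p ^ n * c), hpos⟩, hdO _ ?_, hbU _ ?_⟩
  · simpa [Nat.ModEq] using hy1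
  · simpa [Nat.ModEq] using hy2

lemma closure_modEq_subset {p : ℕ} (hp : p.Prime) {n : ℕ} (hn : n ≠ 0) (a : ℕ) :
    closure {y : ℕ+ | (y : ℕ) ≡ a [MOD p ^ n]} ⊆ {w | p ∣ w ∨ (w : ℕ) ≡ a [MOD p ^ n]} := by
  refine closure_minimal (fun y hy => Or.inr hy) ?_
  rw [← isOpen_compl_iff, isOpen_iff_forall_mem_open]
  intro w hw
  simp only [Set.mem_compl_iff, Set.mem_ofPred_eq, not_or] at hw
  refine ⟨{y : ℕ+ | (y : ℕ) ≡ w [MOD p ^ n]}, ?_, isOpen_modEq (pow_pos hp.pos n)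
    (Nat.Coprime.pow_right _ ((hp.coprime_iff_not_dvd).2 hw.1).symm), Nat.ModEq.refl _⟩
  intro y hy
  simp only [Set.mem_compl_iff, Set.mem_ofPred_eq, not_or]
  refine ⟨fun h => hw.1 ?_, fun h => hw.2 (hy.symm.trans h)⟩
  exact ((Nat.ModEq.dvd_iff hy (dvd_pow_self p hn)).1 h)

/-- A topological relation that holds for distinct coprime numbers and forces coprimality: for some
point `z`, given any nonempty open set `O`, the points `x, y, z` have neighbourhoods the closures
of which meet inside the closure of `O`. -/
def TopCoprime (x y : ℕ+) : Prop :=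
  ∃ z : ℕ+, ∀ O : Set ℕ+, IsOpen O → O.Nonempty → ∃ U V W : Set ℕ+,
    IsOpen U ∧ IsOpen V ∧ IsOpen W ∧ x ∈ U ∧ y ∈ V ∧ z ∈ W ∧
      closure U ∩ closure V ∩ closure W ⊆ closure O

lemma TopCoprime.map (h : ℕ+ ≃ₜ ℕ+) {x y : ℕ+} (hxy : TopCoprime x y) :
    TopCoprime (h x) (h y) := by
  obtain ⟨z, hz⟩ := hxy
  refine ⟨h z, fun O hO hne => ?_⟩
  obtain ⟨U, V, W, hU, hV, hW, hxU, hyV, hzW, hsub⟩ := hz (h ⁻¹' O) (hO.preimage h.continuous)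
    (hne.preimage h.surjective)
  refine ⟨h '' U, h '' V, h '' W, h.isOpenMap _ hU, h.isOpenMap _ hV, h.isOpenMap _ hW,
    Set.mem_image_of_mem _ hxU, Set.mem_image_of_mem _ hyV, Set.mem_image_of_mem _ hzW, ?_⟩
  rw [← h.image_closure, ← h.image_closure, ← h.image_closure,
    ← Set.image_inter h.injective, ← Set.image_inter h.injective, Set.image_subset_iff,
    h.preimage_closure]
  exact hsub

lemma TopCoprime.coprime {x y : ℕ+} (hxy : TopCoprime x y) : Nat.Coprime x y := by
  by_contra hne
  obtain ⟨p, hp, hpx, hpy⟩ := Nat.Prime.not_coprime_iff_dvd.1 hne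
  obtain ⟨z, hz⟩ := hxy
  -- Only `z` can impose a condition at `p`; `c` is a residue compatible with it.
  obtain ⟨c, hc0, hpc, hcz⟩ : ∃ c : ℕ, 0 < c ∧ ¬ p ∣ c ∧ (p ∣ z ∨ c = z) := by
    by_cases hpz : p ∣ z
    · exact ⟨1, one_pos, hp.not_dvd_one, Or.inl hpz⟩
    · exact ⟨z, z.pos, hpz, Or.inr rfl⟩
  have hco : Nat.Coprime (c + p) (p ^ 2) := by
    apply Nat.Coprime.pow_right
    simpa using ((hp.coprime_iff_not_dvd).2 hpc).symm
  obtain ⟨U, V, W, hU, hV, hW, hxU, hyV, hzW, hsub⟩ := hz _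
    (isOpen_modEq (pow_pos hp.pos 2) hco) ⟨⟨c + p, by omega⟩, Nat.ModEq.refl _⟩
  obtain ⟨c1, n1, hc1, hpc1, h1⟩ := exists_mem_closure hU hxU hp
  obtain ⟨c2, n2, hc2, hpc2, h2⟩ := exists_mem_closure hV hyV hp
  obtain ⟨c3, n3, hc3, hpc3, h3⟩ := exists_mem_closure hW hzW hp
  have hcop : Nat.Coprime (p ^ (n3 + 2)) (c1 * c2 * c3) :=
    Nat.Coprime.pow_left _ ((hpc1.mul_right hpc2).mul_right hpc3)
  obtain ⟨w, hw1, hw2⟩ := Nat.chineseRemainder hcop c 0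
  have hwd := Nat.modEq_zero_iff_dvd.1 hw2
  have hwp : ¬ p ∣ w := fun h => hpc ((hw1.dvd_iff (dvd_pow_self p (by omega))).1 h)
  have hw0 : 0 < w := Nat.pos_of_ne_zero (by rintro rfl; exact hwp (dvd_zero p))
  have hmem := hsub (a := ⟨w, hw0⟩) ⟨⟨h1 _ (dvd_trans ⟨c2 * c3, by ring⟩ hwd) (Or.inl hpx),
    h2 _ (dvd_trans ⟨c1 * c3, by ring⟩ hwd) (Or.inl hpy)⟩,
    h3 _ (dvd_trans ⟨c1 * c2, by ring⟩ hwd) (hcz.imp_right fun hh => by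
      rw [← hh]; exact hw1.of_dvd (pow_dvd_pow p (by omega)))⟩
  rcases closure_modEq_subset hp two_ne_zero _ hmem with h | h
  · exact hwp h
  · have h4 : c + 0 ≡ c + p [MOD p ^ 2] := (hw1.of_dvd (pow_dvd_pow p (by omega))).symm.trans h
    have h5 := (Nat.modEq_zero_iff_dvd.1 (Nat.ModEq.add_left_cancel' c h4).symm)
    have h6 := Nat.le_of_dvd hp.pos h5
    nlinarith [hp.two_le]

/-- The neighbourhood of `x` cut out by the congruences modulo `p ^ N`, for the primes `p ∣ b`
not dividing `x`. -/
def primeNhd (b N : ℕ) (x : ℕ+) : Set ℕ+ :=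
  ⋂ p ∈ b.primeFactors.filter (fun p => ¬ p ∣ (x : ℕ)), {y : ℕ+ | (y : ℕ) ≡ x [MOD p ^ N]}

lemma isOpen_primeNhd (b N : ℕ) (x : ℕ+) : IsOpen (primeNhd b N x) := by
  refine isOpen_biInter_finset fun p hp => ?_
  rw [Finset.mem_filter, Nat.mem_primeFactors] at hp
  exact isOpen_modEq (pow_pos hp.1.1.pos _)
    (Nat.Coprime.pow_right _ ((hp.1.1.coprime_iff_not_dvd).2 hp.2).symm)

lemma mem_primeNhd (b N : ℕ) (x : ℕ+) : x ∈ primeNhd b N x := by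
  simp only [primeNhd, Set.mem_iInter]
  exact fun _ _ => Nat.ModEq.refl _

lemma closure_primeNhd {b N : ℕ} {x w : ℕ+} (hb : b ≠ 0) (hN : N ≠ 0)
    (hw : w ∈ closure (primeNhd b N x))
    {p : ℕ} (hp : p.Prime) (hpb : p ∣ b) (hpx : ¬ p ∣ x) :
    p ∣ w ∨ (w : ℕ) ≡ x [MOD p ^ N] := by
  refine closure_modEq_subset hp hN x (closure_mono ?_ hw)
  refine Set.biInter_subset_of_mem (t := fun p : ℕ => {y : ℕ+ | (y : ℕ) ≡ x [MOD p ^ N]}) ?_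
  simp [hp, hpb, hb, hpx]

lemma topCoprime_of_coprime {x y : ℕ+} (hne : x ≠ y) (hxy : Nat.Coprime x y) :
    TopCoprime x y := by
  have hne' : (x : ℕ) ≠ y := fun h => hne (PNat.coe_injective h)
  refine ⟨x * y + 1, fun O hO ⟨a, ha⟩ => ?_⟩
  obtain ⟨b, hb, hab, hbO⟩ := exists_modEq_subset hO ha
  set z : ℕ+ := x * y + 1 with hz
  have hzv : (z : ℕ) = x * y + 1 := by simp [hz]
  have hx := x.pos
  have hy := y.pos
  have hxz : (x : ℕ) < z := by rw [hzv]; nlinarith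
  have hyz : (y : ℕ) < z := by rw [hzv]; nlinarith
  have hcxz : Nat.Coprime x z := by rw [hzv]; simp
  have hcyz : Nat.Coprime y z := by rw [hzv]; simp
  -- Modulo `p ^ z` the three numbers `x, y, z` are pairwise incongruent.
  have hlt : ∀ p : ℕ, p.Prime → (z : ℕ) < p ^ (z : ℕ) := fun p hp => Nat.lt_pow_self hp.one_lt
  refine ⟨primeNhd b z x, primeNhd b z y, primeNhd b z z, isOpen_primeNhd _ _ _,
    isOpen_primeNhd _ _ _, isOpen_primeNhd _ _ _, mem_primeNhd _ _ _, mem_primeNhd _ _ _,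
    mem_primeNhd _ _ _, ?_⟩
  rintro w ⟨⟨h1, h2⟩, h3⟩
  have hdiv : ∀ p : ℕ, p.Prime → p ∣ b → p ∣ w := by
    intro p hp hpb
    have two : ∀ u v : ℕ+, (u : ℕ) ≤ z → (v : ℕ) ≤ z → (u : ℕ) ≠ v →
        w ∈ closure (primeNhd b z u) → w ∈ closure (primeNhd b z v) →
        ¬ p ∣ u → ¬ p ∣ v → p ∣ w := by
      intro u v hu hv huv hwu hwv hpu hpv
      rcases closure_primeNhd hb.ne' z.pos.ne' hwu hp hpb hpu with h | h
      · exact h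
      rcases closure_primeNhd hb.ne' z.pos.ne' hwv hp hpb hpv with h' | h'
      · exact h'
      exact absurd (Nat.ModEq.eq_of_lt_of_lt (h.symm.trans h') (hu.trans_lt (hlt p hp))
        (hv.trans_lt (hlt p hp))) huv
    by_cases hpx : p ∣ x
    · exact two y z hyz.le le_rfl hyz.ne h2 h3
        (fun h => Nat.not_coprime_of_dvd_of_dvd hp.one_lt hpx h hxy)
        (fun h => Nat.not_coprime_of_dvd_of_dvd hp.one_lt hpx h hcxz)
    · by_cases hpy : p ∣ y
      · exact two x z hxz.le le_rfl hxz.ne h1 h3 hpx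
          (fun h => Nat.not_coprime_of_dvd_of_dvd hp.one_lt hpy h hcyz)
      · exact two x y hxz.le hyz.le hne' h1 h2 hpx hpy
  rw [mem_closure_iff]
  intro V hV hwV
  obtain ⟨d, hd, hwd, hdV⟩ := exists_modEq_subset hV hwV
  have hbd : Nat.Coprime d b := by
    by_contra hcon
    obtain ⟨p, hp, hpd, hpb⟩ := Nat.Prime.not_coprime_iff_dvd.1 hcon
    exact Nat.not_coprime_of_dvd_of_dvd hp.one_lt (hdiv p hp hpb) hpd hwd
  obtain ⟨t, ht1, ht2⟩ := Nat.chineseRemainder hbd w a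
  refine ⟨⟨t + d * b, by positivity⟩, hdV _ ?_, hbO _ ?_⟩
  · simpa [Nat.ModEq] using ht1
  · simpa [Nat.ModEq] using ht2

lemma coprime_iff (h : ℕ+ ≃ₜ ℕ+) {x y : ℕ+} (hne : x ≠ y) :
    Nat.Coprime x y ↔ Nat.Coprime (h x) (h y) := by
  constructor
  · exact fun hc => ((topCoprime_of_coprime hne hc).map h).coprime
  · intro hc
    have := ((topCoprime_of_coprime (h.injective.ne hne) hc).map h.symm).coprime
    simpa using this

/-! ### The correspondence of primes -/

lemma map_one_eq (h : ℕ+ ≃ₜ ℕ+) : h 1 = 1 := by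
  by_contra h1
  have h2 : (1 : ℕ) < h 1 := by
    have := (h 1).pos
    have h3 : ((h 1 : ℕ+) : ℕ) ≠ 1 := fun e => h1 (PNat.coe_injective e)
    omega
  -- `h 1` is not coprime to its square, whereas `1` is coprime to everything.
  obtain ⟨y, hy⟩ := h.surjective (h 1 * h 1)
  have hne : (1 : ℕ+) ≠ y := by
    rintro rfl
    have := congrArg PNat.val hy
    simp only [PNat.mul_coe] at this
    have h4 : ((h 1 : ℕ+) : ℕ) = (h 1 : ℕ+) * (h 1 : ℕ+) := this
    nlinarith
  have hc := (coprime_iff h hne).1 (by simp)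
  rw [hy, PNat.mul_coe] at hc
  exact Nat.not_coprime_of_dvd_of_dvd h2 dvd_rfl (dvd_mul_right _ _) hc

/-- The primes `p` and `q` correspond under `h`: the multiples of `p` are mapped onto the multiples
of `q`. -/
structure Corr (h : ℕ+ ≃ₜ ℕ+) (p q : ℕ) : Prop where
  left : p.Prime
  right : q.Prime
  dvd_iff : ∀ x : ℕ+, p ∣ x ↔ q ∣ h x

namespace Corr

variable {h : ℕ+ ≃ₜ ℕ+} {p q p' q' : ℕ}

lemma symm (H : Corr h p q) : Corr h.symm q p :=
  ⟨H.right, H.left, fun x => by rw [H.dvd_iff, h.apply_symm_apply]⟩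

lemma exists_right (h : ℕ+ ≃ₜ ℕ+) (hp : p.Prime) : ∃ q, Corr h p q := by
  let P : ℕ+ := ⟨p, hp.pos⟩
  have hP : (P : ℕ) = p := rfl
  have hP1 : P ≠ 1 := fun e => hp.ne_one (by rw [← hP, e]; rfl)
  have hu : ((h P : ℕ+) : ℕ) ≠ 1 := fun e =>
    hP1 (h.injective (by rw [map_one_eq]; exact PNat.coe_injective e))
  have key : ∀ x : ℕ+, p ∣ x ↔ ¬ Nat.Coprime (h P) (h x) := by
    intro x
    by_cases hx : P = x
    · subst hx
      simp only [hP, dvd_refl, true_iff, Nat.coprime_self]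
      exact hu
    · rw [← coprime_iff h hx, hP, hp.coprime_iff_not_dvd, not_not]
  have hq := Nat.minFac_prime hu
  refine ⟨_, hp, hq, fun x => ?_⟩
  rw [key]
  refine ⟨fun hx => ?_, fun hx hc =>
    Nat.not_coprime_of_dvd_of_dvd hq.one_lt (Nat.minFac_dvd _) hx hc⟩
  obtain ⟨s, hs, hsP, hsx⟩ := Nat.Prime.not_coprime_iff_dvd.1 hx
  suffices hsq : s = Nat.minFac (h P) by rwa [← hsq]
  by_contra hne
  -- Distinct prime divisors of `h p` would pull back to two coprime multiples of `p`.
  set Q : ℕ+ := ⟨Nat.minFac (h P), hq.pos⟩ with hQ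
  set S : ℕ+ := ⟨s, hs.pos⟩ with hS
  have hSQ : S ≠ Q := fun e => hne (congrArg PNat.val e)
  have h1 : p ∣ h.symm S := by
    rw [key, h.apply_symm_apply]
    exact Nat.not_coprime_of_dvd_of_dvd hs.one_lt hsP (dvd_refl s)
  have h2 : p ∣ h.symm Q := by
    rw [key, h.apply_symm_apply]
    exact Nat.not_coprime_of_dvd_of_dvd hq.one_lt (Nat.minFac_dvd _) (dvd_refl _)
  refine Nat.not_coprime_of_dvd_of_dvd hp.one_lt h1 h2 ?_
  rw [coprime_iff h (h.symm.injective.ne hSQ), h.apply_symm_apply, h.apply_symm_apply]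
  exact (Nat.coprime_primes hs hq).2 hne

lemma exists_left (h : ℕ+ ≃ₜ ℕ+) (hq : q.Prime) : ∃ p, Corr h p q := by
  obtain ⟨p, hp⟩ := exists_right h.symm hq
  exact ⟨p, hp.symm⟩

lemma right_unique (H : Corr h p q) (H' : Corr h p q') : q = q' := by
  let Q : ℕ+ := ⟨q, H.right.pos⟩
  have h1 : p ∣ h.symm Q := (H.dvd_iff _).2 (by rw [h.apply_symm_apply]; exact dvd_refl q)
  have h2 := (H'.dvd_iff _).1 h1
  rw [h.apply_symm_apply] at h2
  exact ((Nat.prime_dvd_prime_iff_eq H'.right H.right).1 h2).symm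

lemma left_unique (H : Corr h p q) (H' : Corr h p' q) : p = p' :=
  right_unique H.symm H'.symm

lemma exists_pow (H : Corr h p q) {x : ℕ+} {k : ℕ} (hx : (x : ℕ) = p ^ k) :
    ∃ j, ((h x : ℕ+) : ℕ) = q ^ j := by
  refine ⟨_, Nat.eq_prime_pow_of_unique_prime_dvd (h x).ne_zero fun {s} hs hsx => ?_⟩
  obtain ⟨t, ht⟩ := exists_left h hs
  have h1 := (ht.dvd_iff x).2 hsx
  rw [hx] at h1
  have h2 := (Nat.prime_dvd_prime_iff_eq ht.left H.left).1 (ht.left.dvd_of_dvd_pow h1)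
  subst h2
  exact ht.right_unique H

/-- A homeomorphism of the Golomb space is continuous from the `p`-adic topology to the `q`-adic
one. If `z` is `p`-adically close to `x` but `h z ≢ h x` modulo `q ^ m`, then the residue classes
of `h x` and `h z` are neighbourhoods whose closures have only multiples of `q` in common, while
the closures of any neighbourhoods of `x` and `z` share a number prime to `p`. -/
lemma exists_modEq (H : Corr h p q) {x : ℕ+} (hx : ¬ p ∣ x) (m : ℕ) :
    ∃ n, ∀ z : ℕ+, (z : ℕ) ≡ x [MOD p ^ n] → ((h z : ℕ+) : ℕ) ≡ h x [MOD q ^ m] := by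
  have hop : ∀ y : ℕ+, ¬ p ∣ y →
      IsOpen (h ⁻¹' {w : ℕ+ | (w : ℕ) ≡ h y [MOD q ^ (m + 1)]}) := fun y hy =>
    (isOpen_modEq (pow_pos H.right.pos _) (Nat.Coprime.pow_right _
      ((H.right.coprime_iff_not_dvd).2 (by rwa [← H.dvd_iff])).symm)).preimage h.continuous
  have hcl : ∀ y w : ℕ+, ¬ p ∣ w →
      w ∈ closure (h ⁻¹' {w : ℕ+ | (w : ℕ) ≡ h y [MOD q ^ (m + 1)]}) →
      ((h w : ℕ+) : ℕ) ≡ h y [MOD q ^ (m + 1)] := by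
    intro y w hw hwc
    rw [← h.preimage_closure] at hwc
    refine (closure_modEq_subset H.right (Nat.succ_ne_zero m) _ hwc).resolve_left ?_
    rwa [← H.dvd_iff]
  obtain ⟨c, n, hc, hpc, hcn⟩ := exists_mem_closure (hop x hx) (x := x) (Nat.ModEq.refl _) H.left
  refine ⟨n + 1, fun z hz => ?_⟩
  have hpz : ¬ p ∣ z := fun hd =>
    hx ((Nat.ModEq.dvd_iff hz (dvd_pow_self p (Nat.succ_ne_zero n))).1 hd)
  obtain ⟨d, l, hd, hpd, hdl⟩ := exists_mem_closure (hop z hpz) (x := z) (Nat.ModEq.refl _) H.left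
  have hcop : Nat.Coprime (p ^ (n + 1 + l)) (c * d) := Nat.Coprime.pow_left _ (hpc.mul_right hpd)
  obtain ⟨w, hw1, hw2⟩ := Nat.chineseRemainder hcop z 0
  have hwd := Nat.modEq_zero_iff_dvd.1 hw2
  have hwp : ¬ p ∣ w := fun hh => hpz ((hw1.dvd_iff (dvd_pow_self p (by omega))).1 hh)
  have hw0 : 0 < w := Nat.pos_of_ne_zero (by rintro rfl; exact hwp (dvd_zero p))
  have hw3 : w ≡ x [MOD p ^ n] :=
    (hw1.of_dvd (pow_dvd_pow p (by omega))).trans (hz.of_dvd (pow_dvd_pow p (by omega)))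
  have e1 := hcl x ⟨w, hw0⟩ hwp (hcn _ (dvd_trans (dvd_mul_right c d) hwd) (Or.inr hw3))
  have e2 := hcl z ⟨w, hw0⟩ hwp (hdl _ (dvd_trans (dvd_mul_left d c) hwd)
    (Or.inr (hw1.of_dvd (pow_dvd_pow p (by omega)))))
  exact (e2.symm.trans e1).of_dvd (pow_dvd_pow q (by omega))

lemma mem_clos (H : Corr h p q) (H' : Corr h p' q') (hne : p' ≠ p) {y : ℕ+}
    (hy : (y : ℕ) ∈ clos p p') : ((h y : ℕ+) : ℕ) ∈ clos q q' := by
  have hpy : ¬ p ∣ y := by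
    obtain ⟨k, hk⟩ := hy 1
    rw [pow_one] at hk
    intro hd
    have h1 := (hk.dvd_iff dvd_rfl).2 hd
    exact hne ((Nat.prime_dvd_prime_iff_eq H.left H'.left).1 (H.left.dvd_of_dvd_pow h1)).symm
  intro m
  obtain ⟨n, hn⟩ := H.exists_modEq hpy m
  obtain ⟨k, hk⟩ := hy n
  obtain ⟨j, hj⟩ := H'.exists_pow (x := ⟨p' ^ k, pow_pos H'.left.pos k⟩) rfl
  exact ⟨j, by rw [← hj]; exact hn _ hk⟩

lemma ne (H : Corr h p q) (H' : Corr h p' q') (hne : p' ≠ p) : q' ≠ q := by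
  rintro rfl
  exact hne (H'.left_unique H)

lemma mem_clos_iff (H : Corr h p q) (H' : Corr h p' q') (hne : p' ≠ p) (y : ℕ+) :
    (y : ℕ) ∈ clos p p' ↔ ((h y : ℕ+) : ℕ) ∈ clos q q' := by
  refine ⟨H.mem_clos H' hne, fun hy => ?_⟩
  have := H.symm.mem_clos H'.symm (H.ne H' hne) hy
  rwa [h.symm_apply_apply] at this

/-- Inclusion of subgroups `clos p s ⊆ clos p t`, encoded as `s ∈ clos p t`, is preserved. -/
lemma prime_mem_clos {s t s' t' : ℕ} (H : Corr h p q) (Hs : Corr h s s') (Ht : Corr h t t')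
    (hs : s ≠ p) (ht : t ≠ p) (hst : s ∈ clos p t) : s' ∈ clos q t' := by
  let S : ℕ+ := ⟨s', Hs.right.pos⟩
  let y : ℕ+ := h.symm S
  have hy : ((h y : ℕ+) : ℕ) = s' := by simp only [y, h.apply_symm_apply]; rfl
  rw [← hy, ← H.mem_clos_iff Ht ht]
  refine clos_trans hst ?_
  rw [H.mem_clos_iff Hs hs, hy]
  exact self_mem_clos _ _

lemma prime_mem_clos_iff {s t s' t' : ℕ} (H : Corr h p q) (Hs : Corr h s s') (Ht : Corr h t t')
    (hs : s ≠ p) (ht : t ≠ p) : s ∈ clos p t ↔ s' ∈ clos q t' :=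
  ⟨H.prime_mem_clos Hs Ht hs ht,
    H.symm.prime_mem_clos Hs.symm Ht.symm (H.ne Hs hs) (H.ne Ht ht)⟩

lemma chainBelow {t t' : ℕ} (H : Corr h p q) (Ht : Corr h t t') (ht : t ≠ p)
    (hc : ChainBelow p t) : ChainBelow q t' := by
  intro u v hu hv huq hvq hut hvt
  obtain ⟨a, Ha⟩ := exists_left h hu
  obtain ⟨b, Hb⟩ := exists_left h hv
  have ha := H.symm.ne Ha.symm huq
  have hb := H.symm.ne Hb.symm hvq
  rw [← H.prime_mem_clos_iff Ha Hb ha hb, ← H.prime_mem_clos_iff Hb Ha hb ha]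
  exact hc a b Ha.left Hb.left ha hb ((H.prime_mem_clos_iff Ha Ht ha ht).2 hut)
    ((H.prime_mem_clos_iff Hb Ht hb ht).2 hvt)

/-- The prime `2` is fixed: the subgroups of `ℤ_2^×` generated by `3` and `5` are incomparable and
have chains below them, while for odd `q` the subgroups with chains below them form a chain. -/
lemma two (H : Corr h 2 q) : q = 2 := by
  by_contra hq
  obtain ⟨a, Ha⟩ := exists_right h Nat.prime_three
  obtain ⟨b, Hb⟩ := exists_right h Nat.prime_five
  have ha := H.chainBelow Ha (by norm_num) (chainBelow_two Nat.prime_three (by norm_num))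
  have hb := H.chainBelow Hb (by norm_num) (chainBelow_two Nat.prime_five (by norm_num))
  have ha1 := modEq_of_chainBelow H.right hq Ha.right (H.ne Ha (by norm_num)) ha
  have hb1 := modEq_of_chainBelow H.right hq Hb.right (H.ne Hb (by norm_num)) hb
  have hq3 : 1 + 2 ≤ 1 * q := by have := H.right.two_le; omega
  have hcmp := clos_comparable (e := 1) H.right one_ne_zero hq3 Ha.right.one_lt Hb.right.one_lt
    (by rwa [pow_one]) (by rwa [pow_one])
  rw [← H.prime_mem_clos_iff Ha Hb (by norm_num) (by norm_num),
    ← H.prime_mem_clos_iff Hb Ha (by norm_num) (by norm_num)] at hcmp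
  rcases hcmp with hh | hh
  · obtain ⟨k, hk⟩ := hh 3
    have := pow_mod_eight (s := 5) (by norm_num) k
    have hk' : 5 ^ k % 8 = 3 % 8 := hk
    omega
  · obtain ⟨k, hk⟩ := hh 3
    have := pow_mod_eight (s := 3) (by norm_num) k
    have hk' : 3 ^ k % 8 = 5 % 8 := hk
    omega

lemma corr_two (h : ℕ+ ≃ₜ ℕ+) : Corr h 2 2 := by
  obtain ⟨q, H⟩ := exists_right h Nat.prime_two
  have := H.two
  rwa [this] at H

end Corr

/-! ### Transfer of the progressions `1 + r ^ n ℕ₀` -/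

/-- `h` maps `1 + r ^ n ℕ₀` onto `1 + s ^ m ℕ₀`. -/
def Maps (h : ℕ+ ≃ₜ ℕ+) (r s n m : ℕ) : Prop :=
  ∀ x : ℕ+, (x : ℕ) ≡ 1 [MOD r ^ n] ↔ ((h x : ℕ+) : ℕ) ≡ 1 [MOD s ^ m]

lemma Maps.of_symm {h : ℕ+ ≃ₜ ℕ+} {r s n m : ℕ} (H : Maps h.symm s r m n) : Maps h r s n m :=
  fun x => by have := H (h x); rw [h.symm_apply_apply] at this; exact this.symm

lemma le_of_modEq_imp {r n m : ℕ} (hr : r.Prime)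
    (h : ∀ x : ℕ+, (x : ℕ) ≡ 1 [MOD r ^ n] → (x : ℕ) ≡ 1 [MOD r ^ m]) : m ≤ n := by
  let x : ℕ+ := ⟨1 + r ^ n, by positivity⟩
  have h1 : 1 + r ^ n ≡ 1 + 0 [MOD r ^ m] := h x (by simp [x, Nat.ModEq])
  exact (Nat.pow_dvd_pow_iff_le_right hr.one_lt).1
    (Nat.modEq_zero_iff_dvd.1 (Nat.ModEq.add_left_cancel' 1 h1))

lemma Maps.le {h : ℕ+ ≃ₜ ℕ+} {r s n m n' m' : ℕ} (hr : r.Prime) (H : Maps h r s n m)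
    (H' : Maps h r s n' m') (hm : m' ≤ m) : n' ≤ n :=
  le_of_modEq_imp hr fun x hx => (H' x).2 (((H x).1 hx).of_dvd (pow_dvd_pow s hm))

lemma Maps.le' {h : ℕ+ ≃ₜ ℕ+} {r s n m n' m' : ℕ} (hs : s.Prime) (H : Maps h r s n m)
    (H' : Maps h r s n' m') (hn : n' ≤ n) : m' ≤ m := by
  refine le_of_modEq_imp hs fun x hx => ?_
  have h1 := H (h.symm x)
  have h2 := H' (h.symm x)
  rw [h.apply_symm_apply] at h1 h2
  exact h2.1 ((h1.2 hx).of_dvd (pow_dvd_pow r hn))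

/-- An order isomorphism between the decreasing sequences `1 + r ^ n ℕ₀` and `1 + s ^ n ℕ₀`, both
indexed by `n ≥ e`, preserves the index. -/
lemma maps_self {h : ℕ+ ≃ₜ ℕ+} {r s e : ℕ} (hr : r.Prime) (hs : s.Prime)
    (h1 : ∀ n, e ≤ n → ∃ m, e ≤ m ∧ Maps h r s n m)
    (h2 : ∀ m, e ≤ m → ∃ n, e ≤ n ∧ Maps h r s n m) (n : ℕ) (hn : e ≤ n) :
    Maps h r s n n := by
  induction n using Nat.strong_induction_on with
  | _ n ih =>
    obtain ⟨m, hm, hnm⟩ := h1 n hn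
    obtain ⟨k, hk, hkn⟩ := h2 n hn
    have hmn : n ≤ m := by
      by_contra hlt
      have := (ih m (by omega) hm).le hr hnm le_rfl
      omega
    have hkn' : n ≤ k := by
      by_contra hlt
      have := (ih k (by omega) hk).le' hs hkn le_rfl
      omega
    have := hkn.le' hs hnm hkn'
    have hmn : m = n := by omega
    rwa [hmn] at hnm

lemma exists_maps_odd {h : ℕ+ ≃ₜ ℕ+} {r s : ℕ} (H : Corr h r s) (hr : r ≠ 2) (hs : s ≠ 2)
    (n : ℕ) (hn : 1 ≤ n) : ∃ m, 1 ≤ m ∧ Maps h r s n m := by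
  have hr3 : 3 ≤ r := by have := H.left.two_le; omega
  have hs3 : 3 ≤ s := by have := H.right.two_le; omega
  obtain ⟨p, hp, hpr, hp1, hcl⟩ := exists_prime_clos_eq (v := n) H.left (by omega) (by nlinarith)
  obtain ⟨q, Hp⟩ := Corr.exists_right h hp
  have hc := H.chainBelow Hp hpr (chainBelow_of_modEq H.left (by omega) (by nlinarith) hp1)
  have hq1 := modEq_of_chainBelow H.right hs Hp.right (H.ne Hp hpr) hc
  obtain ⟨m, hm, hclq⟩ := clos_of_modEq (e := 1) H.right one_ne_zero (by omega) Hp.right.one_lt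
    (by rwa [pow_one])
  refine ⟨m, hm, fun x => ?_⟩
  have := H.mem_clos_iff Hp hpr x
  rwa [hcl, hclq] at this

lemma maps_odd {h : ℕ+ ≃ₜ ℕ+} {r s : ℕ} (H : Corr h r s) (hr : r ≠ 2)
    (n : ℕ) (hn : 1 ≤ n) : Maps h r s n n := by
  have hs : s ≠ 2 := by
    rintro rfl
    exact hr H.symm.two
  refine maps_self H.left H.right (exists_maps_odd H hr hs) (fun m hm => ?_) n hn
  obtain ⟨k, hk, hh⟩ := exists_maps_odd H.symm hs hr m hm
  exact ⟨k, hk, hh.of_symm⟩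

lemma mem_clos_two_five (y : ℕ) : y ∈ clos 2 5 ↔ y ≡ 1 [MOD 2 ^ 2] :=
  mem_clos_iff (r := 2) (v := 2) (x := 1) Nat.prime_two (by norm_num) (by norm_num) (by norm_num)

/-- Among the topologically cyclic subgroups of `ℤ_2^×` with prime generator, the non-maximal ones
are the groups `1 + 2 ^ n ℤ_2` with `n ≥ 3`. -/
lemma exists_maps_two (h : ℕ+ ≃ₜ ℕ+) (n : ℕ) (hn : 3 ≤ n) : ∃ m, 3 ≤ m ∧ Maps h 2 2 n m := by
  have H := Corr.corr_two h
  obtain ⟨p, hp, hp2, hp1, hcl⟩ := exists_prime_clos_eq (r := 2) (v := n) Nat.prime_two (by omega)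
    (by omega)
  obtain ⟨q, Hp⟩ := Corr.exists_right h hp
  obtain ⟨b, Hb⟩ := Corr.exists_right h Nat.prime_five
  have hp5 : p ∈ clos 2 5 := (mem_clos_two_five p).2 (hp1.of_dvd (pow_dvd_pow 2 (by omega)))
  have h5p : 5 ∉ clos 2 p := by
    rw [hcl]
    intro h5
    have h8 : 5 ≡ 1 [MOD 2 ^ 3] := Nat.ModEq.of_dvd (pow_dvd_pow 2 hn) h5
    revert h8; decide
  rw [H.prime_mem_clos_iff Hp Hb hp2 (by norm_num)] at hp5
  rw [H.prime_mem_clos_iff Hb Hp (by norm_num) hp2] at h5p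
  have hq8 : q % 8 = 1 := by
    by_contra hq
    exact h5p (mem_clos_two_symm Hb.right (H.ne Hb (by norm_num)) hq hp5)
  obtain ⟨m, hm, hclq⟩ := clos_of_modEq (e := 3) Nat.prime_two (by norm_num) (by norm_num)
    Hp.right.one_lt hq8
  refine ⟨m, hm, fun x => ?_⟩
  have := H.mem_clos_iff Hp hp2 x
  rwa [hcl, hclq] at this

lemma maps_two_of_three_le (h : ℕ+ ≃ₜ ℕ+) (n : ℕ) (hn : 3 ≤ n) : Maps h 2 2 n n := by
  refine maps_self Nat.prime_two Nat.prime_two (exists_maps_two h) (fun m hm => ?_) n hn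
  obtain ⟨k, hk, hh⟩ := exists_maps_two h.symm m hm
  exact ⟨k, hk, hh.of_symm⟩

lemma maps_two_one (h : ℕ+ ≃ₜ ℕ+) : Maps h 2 2 1 1 := by
  intro x
  have := (Corr.corr_two h).dvd_iff x
  simp only [Nat.ModEq, pow_one]
  omega

lemma coe_ne_one (h : ℕ+ ≃ₜ ℕ+) {x : ℕ+} (hx : (x : ℕ) ≠ 1) : ((h x : ℕ+) : ℕ) ≠ 1 := by
  intro e
  have : h x = h 1 := by rw [map_one_eq]; exact PNat.coe_injective e
  exact hx (by rw [h.injective this]; rfl)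

/-- An odd prime dividing `h x - 1` corresponds to an odd prime dividing `x - 1`. -/
lemma exists_corr_of_dvd (h : ℕ+ ≃ₜ ℕ+) {x : ℕ+} {s : ℕ} (hs : s.Prime) (hs2 : s ≠ 2)
    (hd : s ∣ (h x : ℕ) - 1) : ∃ t, Corr h t s ∧ t ∣ (x : ℕ) - 1 := by
  obtain ⟨t, Ht⟩ := Corr.exists_left h hs
  have ht2 : t ≠ 2 := by
    rintro rfl
    exact hs2 Ht.two
  refine ⟨t, Ht, ?_⟩
  have h1 := (maps_odd Ht ht2 1 le_rfl x).2
  rw [pow_one, pow_one] at h1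
  exact (Nat.modEq_iff_dvd' x.pos).1
    (h1 ((Nat.modEq_iff_dvd' (h x).pos).2 hd).symm).symm

/-- For `x = 3` or `x = 5`, `h x - 1` is a power of two, even, and not divisible by `8`. -/
lemma eq_three_or_five (h : ℕ+ ≃ₜ ℕ+) {x : ℕ+} (hx : (x : ℕ) = 3 ∨ (x : ℕ) = 5) :
    (h x : ℕ) = 3 ∨ (h x : ℕ) = 5 := by
  have hne : ((h x : ℕ+) : ℕ) ≠ 1 := coe_ne_one h (by omega)
  have hpos := (h x).pos
  have hpow : ∃ j, (h x : ℕ) - 1 = 2 ^ j := by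
    refine ⟨_, Nat.eq_prime_pow_of_unique_prime_dvd (by omega) fun {s} hs hd => ?_⟩
    by_contra hs2
    obtain ⟨t, Ht, htd⟩ := exists_corr_of_dvd h hs hs2 hd
    have h4 : t ∣ 2 ^ 2 := by
      rcases hx with e | e <;> rw [e] at htd
      · exact htd.trans (by norm_num)
      · exact htd
    have ht2 := (Nat.prime_dvd_prime_iff_eq Ht.left Nat.prime_two).1 (Ht.left.dvd_of_dvd_pow h4)
    subst ht2
    exact hs2 Ht.two
  obtain ⟨j, hj⟩ := hpow
  have hodd := (maps_two_one h x).1 (by rcases hx with e | e <;> rw [e] <;> decide)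
  have h8 : ¬ ((h x : ℕ+) : ℕ) ≡ 1 [MOD 2 ^ 3] := by
    rw [← maps_two_of_three_le h 3 le_rfl x]
    rcases hx with e | e <;> rw [e] <;> decide
  have hj3 : j < 3 := by
    by_contra hj3
    refine h8 ((Nat.modEq_iff_dvd' hpos).2 ?_).symm
    rw [hj]
    exact pow_dvd_pow 2 (by omega)
  have hodd' : ((h x : ℕ+) : ℕ) % 2 = 1 := hodd
  interval_cases j <;> omega

/-- The prime `3` is fixed: `h 4 - 1` is the prime corresponding to `3`, this prime divides
`h 3 ∈ {3, 5}`, and `h 4` is a power of two. -/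
lemma corr_three (h : ℕ+ ≃ₜ ℕ+) : Corr h 3 3 := by
  obtain ⟨q, H⟩ := Corr.exists_right h Nat.prime_three
  let x : ℕ+ := 4
  have hx : (x : ℕ) = 4 := rfl
  have hpos := (h x).pos
  have hne : ((h x : ℕ+) : ℕ) ≠ 1 := coe_ne_one h (by omega)
  have heven := ((Corr.corr_two h).dvd_iff x).1 (by rw [hx]; norm_num)
  obtain ⟨j, hj⟩ : ∃ j, (h x : ℕ) - 1 = q ^ j := by
    refine ⟨_, Nat.eq_prime_pow_of_unique_prime_dvd (by omega) fun {s} hs hd => ?_⟩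
    have hs2 : s ≠ 2 := by rintro rfl; omega
    obtain ⟨t, Ht, htd⟩ := exists_corr_of_dvd h hs hs2 hd
    rw [hx] at htd
    have ht3 := (Nat.prime_dvd_prime_iff_eq Ht.left Nat.prime_three).1 htd
    subst ht3
    exact Ht.right_unique H
  have h3 := (maps_odd H (by norm_num) 1 le_rfl x).1 (by rw [hx]; decide)
  have h9 : ¬ ((h x : ℕ+) : ℕ) ≡ 1 [MOD q ^ 2] := by
    rw [← maps_odd H (by norm_num) 2 (by norm_num) x, hx]; decide
  have hj1 : j = 1 := by
    have hj2 : j < 2 := by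
      by_contra hj2
      refine h9 ((Nat.modEq_iff_dvd' hpos).2 ?_).symm
      rw [hj]
      exact pow_dvd_pow q (by omega)
    have hd := (Nat.modEq_iff_dvd' hpos).1 h3.symm
    rw [hj] at hd
    have := (Nat.pow_dvd_pow_iff_le_right H.right.one_lt).1 hd
    omega
  subst hj1
  rw [pow_one] at hj
  let y : ℕ+ := 3
  have hy : (y : ℕ) = 3 := rfl
  have hqy := (H.dvd_iff y).1 (by rw [hy])
  rcases eq_three_or_five h (Or.inl hy) with e | e <;> rw [e] at hqy
  · have := (Nat.prime_dvd_prime_iff_eq H.right Nat.prime_three).1 hqy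
    rwa [this] at H
  · have hq5 := (Nat.prime_dvd_prime_iff_eq H.right Nat.prime_five).1 hqy
    obtain ⟨k, hk⟩ := (Corr.corr_two h).exists_pow (x := x) (k := 2) hx
    have h32 : 3 ∣ 2 ^ k := by rw [← hk]; omega
    have := (Nat.prime_dvd_prime_iff_eq Nat.prime_three Nat.prime_two).1
      (Nat.prime_three.dvd_of_dvd_pow h32)
    omega

lemma corr_five (h : ℕ+ ≃ₜ ℕ+) : Corr h 5 5 := by
  obtain ⟨q, H⟩ := Corr.exists_right h Nat.prime_five
  let x : ℕ+ := 5
  have hx : (x : ℕ) = 5 := rfl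
  have hqx := (H.dvd_iff x).1 (by rw [hx])
  rcases eq_three_or_five h (Or.inr hx) with e | e
  · have := ((corr_three h).dvd_iff x).2 (by rw [e])
    rw [hx] at this
    omega
  · rw [e] at hqx
    have := (Nat.prime_dvd_prime_iff_eq H.right Nat.prime_five).1 hqx
    rwa [this] at H

lemma maps_two_two (h : ℕ+ ≃ₜ ℕ+) : Maps h 2 2 2 2 := by
  intro x
  rw [← mem_clos_two_five, ← mem_clos_two_five]
  exact (Corr.corr_two h).mem_clos_iff (corr_five h) (by norm_num) x

lemma Corr.maps {h : ℕ+ ≃ₜ ℕ+} {r s : ℕ} (H : Corr h r s) {n : ℕ} (hn : 0 < n) :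
    Maps h r s n n := by
  by_cases hr : r = 2
  · subst hr
    have hs := H.two
    subst hs
    rcases (show n = 1 ∨ n = 2 ∨ 3 ≤ n by omega) with rfl | rfl | h3
    · exact maps_two_one h
    · exact maps_two_two h
    · exact maps_two_of_three_le h n h3
  · exact maps_odd H hr n hn

/-- `h` maps primes to primes. With `h (p ^ j) = q`, every prime power dividing `h p - 1` comes from
one dividing `p - 1`, hence `p ^ j - 1`, and therefore divides `q - 1`. Thus `h p ≤ q`, while
`q ∣ h p`. -/
lemma Corr.coe_apply {h : ℕ+ ≃ₜ ℕ+} {p : ℕ+} {q : ℕ} (H : Corr h p q) : ((h p : ℕ+) : ℕ) = q := by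
  let Q : ℕ+ := ⟨q, H.right.pos⟩
  obtain ⟨j, hj⟩ := H.symm.exists_pow (x := Q) (k := 1) (pow_one q).symm
  have hdvd : ((h p : ℕ+) : ℕ) - 1 ∣ q - 1 := by
    rw [Nat.dvd_iff_prime_pow_dvd_dvd]
    intro s n hs hd
    rcases Nat.eq_zero_or_pos n with rfl | hn
    · simp
    obtain ⟨r, Hr⟩ := Corr.exists_left h hs
    have h1 := (Hr.maps hn p).2 ((Nat.modEq_iff_dvd' (h p).pos).2 hd).symm
    have h2 := (Hr.maps hn (h.symm Q)).1 (by rw [hj]; simpa using h1.pow j)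
    rw [h.apply_symm_apply] at h2
    exact (Nat.modEq_iff_dvd' H.right.pos).1 h2.symm
  have hle := Nat.le_of_dvd (by have := H.right.two_le; omega) hdvd
  have hge := Nat.le_of_dvd (h p).pos ((H.dvd_iff p).1 dvd_rfl)
  have := (h p).pos
  have := H.right.two_le
  omega

lemma mem_golombBasic_one (x : ℕ+) (b : ℕ) : x ∈ golombBasic 1 b ↔ (x : ℕ) ≡ 1 [MOD b] := by
  rw [Nat.ModEq.comm, Nat.modEq_iff_dvd' x.pos]
  constructor
  · rintro ⟨n, hn⟩
    exact ⟨n, by omega⟩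
  · rintro ⟨n, hn⟩
    exact ⟨n, by have := x.pos; omega⟩

/-- For any homeomorphism `h` of the Golomb space, any prime `p` and any `n ∈ ℕ`,
`h(1 + p^nℕ₀) = 1 + h(p)^nℕ₀`. -/
theorem golomb_homeo_progressions (h : ℕ+ ≃ₜ ℕ+) (p : ℕ+) (hp : (p : ℕ).Prime)
    (n : ℕ) (hn : 0 < n) :
    h '' golombBasic 1 ((p : ℕ) ^ n) = golombBasic 1 ((↑(h p) : ℕ) ^ n) := by
  obtain ⟨q, H⟩ := Corr.exists_right h hp
  rw [H.coe_apply]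
  ext y
  obtain ⟨x, rfl⟩ := h.surjective y
  rw [h.injective.mem_set_image, mem_golombBasic_one, mem_golombBasic_one]
  exact H.maps hn x
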